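/- arXiv:1310.0701 — 4 statements merged into one kernel-verified Lean document; each statement's English description precedes it below -/
import Mathlib

section
/- Let (X,d) be a metric space and x₀ ∈ X a fixed base point. Define the Brownian kernel K(x,y) = (1/2)(d(x,x₀) + d(y,x₀) − d(x,y)). Then K is a positive definite kernel on X (i.e. for every n, all x₁,…,xₙ ∈ X and all ξ₁,…,ξₙ ∈ ℂ, the real part of ∑_{i,j=1}^n K(xᵢ,xⱼ) ξᵢ conj(ξⱼ) is ≥ 0) if and only if d is a restricted negative definite kernel on X (i.e. for every n, all x₁,…,xₙ ∈ X and all ξ₁,…,ξₙ ∈ ℂ with ∑_{i=1}^n ξᵢ = 0, the real part of ∑_{i,j=1}^n d(xᵢ,xⱼ) ξᵢ conj(ξⱼ) is ≤ 0). -/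
theorem brownian_aux {X : Type*} [MetricSpace X] (x₀ : X) (n : ℕ) (x : Fin n → X)
    (ξ : Fin n → ℂ) :
    (∑ i, ∑ j, (((dist (x i) x₀ + dist (x j) x₀ - dist (x i) (x j)) / 2 : ℝ) : ℂ)
            * ξ i * (starRingEnd ℂ) (ξ j)) =
      ((∑ i, (dist (x i) x₀ : ℂ) * ξ i) * (∑ j, (starRingEnd ℂ) (ξ j))
        + (∑ i, ξ i) * (∑ j, (dist (x j) x₀ : ℂ) * (starRingEnd ℂ) (ξ j))
        - ∑ i, ∑ j, ((dist (x i) (x j) : ℝ) : ℂ) * ξ i * (starRingEnd ℂ) (ξ j)) / 2 := by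
  rw [Finset.sum_mul_sum, Finset.sum_mul_sum, ← Finset.sum_add_distrib,
    ← Finset.sum_sub_distrib, Finset.sum_div]
  refine Finset.sum_congr rfl fun i _ => ?_
  rw [← Finset.sum_add_distrib, ← Finset.sum_sub_distrib, Finset.sum_div]
  refine Finset.sum_congr rfl fun j _ => ?_
  push_cast
  ring

open Finset in
/-- The Brownian kernel `K(x,y) = (d(x,x₀)+d(y,x₀)-d(x,y))/2` on a metric space `X`
is positive definite iff the distance `d` is a restricted negative definite kernel. -/
theorem brownian_kernel_posdef_iff_dist_restricted_negdef
    {X : Type*} [MetricSpace X] (x₀ : X) :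
    (∀ (n : ℕ) (x : Fin n → X) (ξ : Fin n → ℂ),
        0 ≤ (∑ i, ∑ j,
          (((dist (x i) x₀ + dist (x j) x₀ - dist (x i) (x j)) / 2 : ℝ) : ℂ)
            * ξ i * (starRingEnd ℂ) (ξ j)).re) ↔
      (∀ (n : ℕ) (x : Fin n → X) (ξ : Fin n → ℂ), (∑ i, ξ i) = 0 →
        (∑ i, ∑ j,
          ((dist (x i) (x j) : ℝ) : ℂ) * ξ i * (starRingEnd ℂ) (ξ j)).re ≤ 0) := by
  constructor
  · intro h n x ξ hs
    have h1 := h n x ξ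
    have hs' : ∑ j, (starRingEnd ℂ) (ξ j) = 0 := by rw [← map_sum, hs, map_zero]
    rw [brownian_aux, hs, hs', mul_zero, zero_mul, zero_add, zero_sub, Complex.div_ofNat_re,
      Complex.neg_re] at h1
    linarith
  · intro h n x ξ
    have h1 := h (n + 1) (Fin.cons x₀ x) (Fin.cons (-∑ i, ξ i) ξ) (by simp [Fin.sum_univ_succ])
    have key : (∑ i, ∑ j, ((dist ((Fin.cons x₀ x : Fin (n+1) → X) i)
          ((Fin.cons x₀ x : Fin (n+1) → X) j) : ℝ) : ℂ)
          * (Fin.cons (-∑ i, ξ i) ξ : Fin (n+1) → ℂ) i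
          * (starRingEnd ℂ) ((Fin.cons (-∑ i, ξ i) ξ : Fin (n+1) → ℂ) j)) =
        (-2 : ℝ) * (∑ i, ∑ j,
          (((dist (x i) x₀ + dist (x j) x₀ - dist (x i) (x j)) / 2 : ℝ) : ℂ)
            * ξ i * (starRingEnd ℂ) (ξ j)) := by
      rw [brownian_aux]
      simp only [Fin.sum_univ_succ, Fin.cons_zero, Fin.cons_succ, dist_self, map_neg, map_sum,
        Finset.sum_add_distrib, ← Finset.sum_mul, dist_comm x₀]
      have e : ∑ j, (dist (x j) x₀ : ℂ) * (-∑ i, ξ i) * (starRingEnd ℂ) (ξ j)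
          = -((∑ i, ξ i) * ∑ j, (dist (x j) x₀ : ℂ) * (starRingEnd ℂ) (ξ j)) := by
        generalize (∑ i, ξ i) = S
        rw [Finset.mul_sum, ← Finset.sum_neg_distrib]
        exact Finset.sum_congr rfl fun j _ => by ring
      rw [e]
      push_cast
      ring
    rw [key, Complex.re_ofReal_mul] at h1
    linarith
end

section
/- For every integer ℓ ≥ 1, (1/π) ∫_0^π t (1 + 2 ∑_{m=1}^{ℓ} cos(m t)) (1 − cos t) dt = (2/π) ( 1 + ∑_{m=1}^{ℓ} ((−1)^m − 1)/m² + ∑_{m=2}^{ℓ} ((m² + 1)/(m² − 1)²) ((−1)^m + 1) ). -/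
open Real Finset in
lemma aux_int (n : ℕ) (hn : 1 ≤ n) :
    ∫ t in (0 : ℝ)..π, t * cos (n * t) = ((-1 : ℝ) ^ n - 1) / (n : ℝ) ^ 2 := by
  have hn0 : (n : ℝ) ≠ 0 := by positivity
  have hd : ∀ t ∈ Set.uIcc (0 : ℝ) π,
      HasDerivAt (fun t : ℝ => t * sin (n * t) / n + cos (n * t) / (n : ℝ) ^ 2) (t * cos (n * t)) t := by
    intro t _
    have h0 : HasDerivAt (fun t : ℝ => (n : ℝ) * t) n t := by
      simpa using (hasDerivAt_id t).const_mul (n : ℝ)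
    have h := (((hasDerivAt_id t).mul h0.sin).div_const (n : ℝ)).add (h0.cos.div_const ((n : ℝ) ^ 2))
    refine h.congr_deriv ?_
    simp only [id]
    field_simp
    ring
  rw [intervalIntegral.integral_eq_sub_of_hasDerivAt hd
    (Continuous.intervalIntegrable (by fun_prop) _ _)]
  simp only [sin_nat_mul_pi, cos_nat_mul_pi, mul_zero, sin_zero, cos_zero]
  ring

open Real Finset in
lemma aux_zero : ∫ t in (0 : ℝ)..π, t * (1 - cos t) = π ^ 2 / 2 + 2 := by
  have h1 := aux_int 1 le_rfl
  have : ∀ t : ℝ, t * (1 - cos t) = t - t * cos ((1 : ℕ) * t) := by intro t; push_cast; ring_nf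
  simp_rw [this]
  rw [intervalIntegral.integral_sub (Continuous.intervalIntegrable (by fun_prop) _ _)
    (Continuous.intervalIntegrable (by fun_prop) _ _), h1, integral_id]
  norm_num

open Real Finset in
lemma aux_one : ∫ t in (0 : ℝ)..π, 2 * (t * cos ((1 : ℕ) * t) * (1 - cos t)) = -4 - π ^ 2 / 2 := by
  have h1 := aux_int 1 le_rfl
  have h2 := aux_int 2 (by norm_num)
  have : ∀ t : ℝ, 2 * (t * cos ((1 : ℕ) * t) * (1 - cos t))
      = 2 * (t * cos ((1 : ℕ) * t)) - (t + t * cos ((2 : ℕ) * t)) := by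
    intro t; push_cast; rw [cos_two_mul]; ring_nf
  simp_rw [this]
  rw [intervalIntegral.integral_sub (Continuous.intervalIntegrable (by fun_prop) _ _)
    (Continuous.intervalIntegrable (by fun_prop) _ _),
    intervalIntegral.integral_add (Continuous.intervalIntegrable (by fun_prop) _ _)
    (Continuous.intervalIntegrable (by fun_prop) _ _),
    intervalIntegral.integral_const_mul, h1, h2, integral_id]
  norm_num

open Real Finset in
lemma aux_step (n : ℕ) (hn : 1 ≤ n) :
    ∫ t in (0 : ℝ)..π, 2 * (t * cos ((n + 1 : ℕ) * t) * (1 - cos t)) =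
      2 * (((-1 : ℝ) ^ (n + 1) - 1) / ((n + 1 : ℕ) : ℝ) ^ 2
      + ((((n + 1 : ℕ) : ℝ) ^ 2 + 1) / (((n + 1 : ℕ) : ℝ) ^ 2 - 1) ^ 2) * ((-1 : ℝ) ^ (n + 1) + 1)) := by
  have h0 := aux_int n hn
  have h1 := aux_int (n + 1) (by omega)
  have h2 := aux_int (n + 2) (by omega)
  have : ∀ t : ℝ, 2 * (t * cos ((n + 1 : ℕ) * t) * (1 - cos t))
      = 2 * (t * cos ((n + 1 : ℕ) * t)) - (t * cos (n * t) + t * cos ((n + 2 : ℕ) * t)) := by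
    intro t
    have e1 : ((n : ℕ) : ℝ) * t = (n + 1 : ℕ) * t - t := by push_cast; ring
    have e2 : ((n + 2 : ℕ) : ℝ) * t = (n + 1 : ℕ) * t + t := by push_cast; ring
    rw [e1, e2, cos_sub, cos_add]; ring
  simp_rw [this]
  rw [intervalIntegral.integral_sub (Continuous.intervalIntegrable (by fun_prop) _ _)
    (Continuous.intervalIntegrable (by fun_prop) _ _),
    intervalIntegral.integral_add (Continuous.intervalIntegrable (by fun_prop) _ _)
    (Continuous.intervalIntegrable (by fun_prop) _ _),
    intervalIntegral.integral_const_mul, h0, h1, h2]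
  have hn0 : (n : ℝ) ≠ 0 := by positivity
  have hn2 : (n : ℝ) + 2 ≠ 0 := by positivity
  have hn1 : (n : ℝ) + 1 ≠ 0 := by positivity
  have e : ((n : ℝ) + 1) ^ 2 - 1 = n * (n + 2) := by ring
  push_cast
  rw [e, pow_succ (-1 : ℝ) n, show (-1 : ℝ) ^ (n + 2) = (-1) ^ n by ring]
  generalize (-1 : ℝ) ^ n = s
  field_simp
  ring

open Real Finset in
/-- The Peter–Weyl coefficient `α_ℓ` of the rotation-angle distance on `SO(3)`:
`(1/π) ∫₀^π t (1 + 2 ∑_{m=1}^ℓ cos(mt)) (1 - cos t) dt` equals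
`(2/π)(1 + ∑_{m=1}^ℓ ((-1)^m - 1)/m² + ∑_{m=2}^ℓ ((m²+1)/(m²-1)²)((-1)^m + 1))`. -/
theorem SO3_peter_weyl_coefficient (ℓ : ℕ) (hℓ : 1 ≤ ℓ) :
    (1 / π) * ∫ t in (0 : ℝ)..π,
        t * (1 + 2 * ∑ m ∈ Finset.Icc 1 ℓ, cos (m * t)) * (1 - cos t) =
      (2 / π) * (1 + (∑ m ∈ Finset.Icc 1 ℓ, ((-1 : ℝ) ^ m - 1) / (m : ℝ) ^ 2)
        + ∑ m ∈ Finset.Icc 2 ℓ,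
            (((m : ℝ) ^ 2 + 1) / ((m : ℝ) ^ 2 - 1) ^ 2) * ((-1 : ℝ) ^ m + 1)) := by
  have hpi : (π : ℝ) ≠ 0 := pi_ne_zero
  suffices h : ∫ t in (0 : ℝ)..π,
        t * (1 + 2 * ∑ m ∈ Finset.Icc 1 ℓ, cos (m * t)) * (1 - cos t) =
      2 * (1 + (∑ m ∈ Finset.Icc 1 ℓ, ((-1 : ℝ) ^ m - 1) / (m : ℝ) ^ 2)
        + ∑ m ∈ Finset.Icc 2 ℓ,
            (((m : ℝ) ^ 2 + 1) / ((m : ℝ) ^ 2 - 1) ^ 2) * ((-1 : ℝ) ^ m + 1)) by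
    rw [h]; ring
  induction ℓ, hℓ using Nat.le_induction with
  | base =>
    have : ∀ t : ℝ, t * (1 + 2 * ∑ m ∈ Finset.Icc 1 1, cos ((m : ℕ) * t)) * (1 - cos t)
        = t * (1 - cos t) + 2 * (t * cos ((1 : ℕ) * t) * (1 - cos t)) := by
      intro t; rw [Finset.Icc_self, Finset.sum_singleton]; ring
    simp_rw [this]
    rw [intervalIntegral.integral_add (Continuous.intervalIntegrable (by fun_prop) _ _)
      (Continuous.intervalIntegrable (by fun_prop) _ _), aux_zero, aux_one]
    norm_num
    ring
  | succ n hn ih =>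
    have : ∀ t : ℝ, t * (1 + 2 * ∑ m ∈ Finset.Icc 1 (n + 1), cos ((m : ℕ) * t)) * (1 - cos t)
        = t * (1 + 2 * ∑ m ∈ Finset.Icc 1 n, cos ((m : ℕ) * t)) * (1 - cos t)
          + 2 * (t * cos ((n + 1 : ℕ) * t) * (1 - cos t)) := by
      intro t; rw [Finset.sum_Icc_succ_top (by omega)]; ring
    simp_rw [this]
    rw [intervalIntegral.integral_add (Continuous.intervalIntegrable (by fun_prop) _ _)
      (Continuous.intervalIntegrable (by fun_prop) _ _), ih, aux_step n hn,
      Finset.sum_Icc_succ_top (by omega), Finset.sum_Icc_succ_top (by omega)]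
    ring
end

section
/- For every even integer ℓ ≥ 2, 1 + ∑_{m=1}^{ℓ} ((−1)^m − 1)/m² + ∑_{m=2}^{ℓ} ((m² + 1)/(m² − 1)²) ((−1)^m + 1) > 0. Consequently, for every even ℓ ≥ 2 the Peter–Weyl coefficient α_ℓ = (2/π)(1 + ∑_{m=1}^{ℓ} ((−1)^m − 1)/m² + ∑_{m=2}^{ℓ} ((m²+1)/(m²−1)²)((−1)^m + 1)) of the rotation-angle distance function on SO(3) is strictly positive. -/
theorem SO3_aux (k : ℕ) :
    1 + (∑ m ∈ Finset.Icc 1 (2 * (k + 1)), ((-1 : ℝ) ^ m - 1) / (m : ℝ) ^ 2)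
        + (∑ m ∈ Finset.Icc 2 (2 * (k + 1)),
            (((m : ℝ) ^ 2 + 1) / ((m : ℝ) ^ 2 - 1) ^ 2) * ((-1 : ℝ) ^ m + 1))
      = 1 / (2 * (k : ℝ) + 3) ^ 2 := by
  induction k with
  | zero =>
    norm_num [Finset.sum_Icc_succ_top]
  | succ k ih =>
    have e : 2 * (k + 1 + 1) = 2 * (k + 1) + 1 + 1 := by ring
    rw [e, Finset.sum_Icc_succ_top (by omega), Finset.sum_Icc_succ_top (by omega),
      Finset.sum_Icc_succ_top (by omega), Finset.sum_Icc_succ_top (by omega)]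
    have h1 : (-1 : ℝ) ^ (2 * (k + 1)) = 1 := by rw [pow_mul]; simp
    rw [pow_succ (-1 : ℝ) (2 * (k + 1) + 1), pow_succ (-1 : ℝ) (2 * (k + 1)), h1]
    have h3 : (2 * (k : ℝ) + 3) ≠ 0 := by positivity
    have h5 : (2 * (k : ℝ) + 5) ≠ 0 := by positivity
    have key : (((2 * (k : ℝ) + 4) ^ 2 + 1) / ((2 * (k : ℝ) + 4) ^ 2 - 1) ^ 2) * 2
        = 1 / (2 * (k : ℝ) + 3) ^ 2 + 1 / (2 * (k : ℝ) + 5) ^ 2 := by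
      have : (2 * (k : ℝ) + 4) ^ 2 - 1 = (2 * (k : ℝ) + 3) * (2 * (k : ℝ) + 5) := by ring
      rw [this]
      field_simp
      ring
    have c1 : ((2 * (k + 1) + 1 : ℕ) : ℝ) = 2 * (k : ℝ) + 3 := by push_cast; ring
    have c2 : ((2 * (k + 1) + 1 + 1 : ℕ) : ℝ) = 2 * (k : ℝ) + 4 := by push_cast; ring
    have c3 : 2 * ((k + 1 : ℕ) : ℝ) + 3 = 2 * (k : ℝ) + 5 := by push_cast; ring
    rw [c1, c2, c3]
    have z1 : ((1 : ℝ) * -1 * -1 - 1) / (2 * (k : ℝ) + 4) ^ 2 = 0 := by norm_num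
    have z2 : ((1 : ℝ) * -1 - 1) / (2 * (k : ℝ) + 3) ^ 2 = -2 * (1 / (2 * (k : ℝ) + 3) ^ 2) := by
      ring
    have z3 : ((1 : ℝ) * -1 * -1 + 1) = 2 := by norm_num
    have z4 : ((1 : ℝ) * -1 + 1) = 0 := by norm_num
    rw [z1, z2, z3, z4, key]
    linarith

open Real Finset in
/-- For every even `ℓ ≥ 2`, the quantity
`1 + ∑_{m=1}^ℓ ((-1)^m - 1)/m² + ∑_{m=2}^ℓ ((m²+1)/(m²-1)²)((-1)^m + 1)` is positive;
consequently the Peter–Weyl coefficient `α_ℓ = (2/π) ·` (that quantity) of the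
rotation-angle distance on `SO(3)` is positive. -/
theorem SO3_alpha_even_pos (ℓ : ℕ) (hℓ : 2 ≤ ℓ) (heven : Even ℓ) :
    0 < 1 + (∑ m ∈ Finset.Icc 1 ℓ, ((-1 : ℝ) ^ m - 1) / (m : ℝ) ^ 2)
        + (∑ m ∈ Finset.Icc 2 ℓ,
            (((m : ℝ) ^ 2 + 1) / ((m : ℝ) ^ 2 - 1) ^ 2) * ((-1 : ℝ) ^ m + 1)) ∧
      0 < (2 / π) * (1 + (∑ m ∈ Finset.Icc 1 ℓ, ((-1 : ℝ) ^ m - 1) / (m : ℝ) ^ 2)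
        + ∑ m ∈ Finset.Icc 2 ℓ,
            (((m : ℝ) ^ 2 + 1) / ((m : ℝ) ^ 2 - 1) ^ 2) * ((-1 : ℝ) ^ m + 1)) := by
  have h : 0 < 1 + (∑ m ∈ Finset.Icc 1 ℓ, ((-1 : ℝ) ^ m - 1) / (m : ℝ) ^ 2)
        + (∑ m ∈ Finset.Icc 2 ℓ,
            (((m : ℝ) ^ 2 + 1) / ((m : ℝ) ^ 2 - 1) ^ 2) * ((-1 : ℝ) ^ m + 1)) := by
    obtain ⟨j, hj⟩ := heven
    obtain ⟨k, rfl⟩ : ∃ k, ℓ = 2 * (k + 1) := ⟨j - 1, by omega⟩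
    rw [SO3_aux k]
    positivity
  exact ⟨h, mul_pos (by positivity) h⟩
end

section
/- The geodesic distance on the unit sphere S³ of Euclidean ℝ⁴, d(x,y) = arccos(⟨x,y⟩), is a restricted negative definite kernel: for every n, all x₁,…,xₙ ∈ S³ and all ξ₁,…,ξₙ ∈ ℂ with ∑ᵢ ξᵢ = 0, the real part of ∑_{i,j} arccos(⟨xᵢ,xⱼ⟩) ξᵢ conj(ξⱼ) is ≤ 0. -/
open Filter Topology in
theorem aux_limit {n : ℕ} (F : ℕ → Matrix (Fin n) (Fin n) ℝ) (A : Matrix (Fin n) (Fin n) ℝ)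
    (hF : ∀ k, (F k).PosSemidef) (h : ∀ i j, Tendsto (fun k => F k i j) atTop (𝓝 (A i j))) :
    A.PosSemidef := by
  refine Matrix.PosSemidef.of_dotProduct_mulVec_nonneg ?_ ?_
  · ext i j
    have h1 := h j i
    have h2 : (fun k => F k j i) = fun k => F k i j := by
      funext k
      simpa using (hF k).1.apply i j
    rw [h2] at h1
    simpa using tendsto_nhds_unique h1 (h i j)
  · intro v
    have : Tendsto (fun k => star v ⬝ᵥ (F k).mulVec v) atTop (𝓝 (star v ⬝ᵥ A.mulVec v)) := by
      simp only [dotProduct, Matrix.mulVec]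
      refine tendsto_finsetSum _ fun i _ => Tendsto.const_mul _ ?_
      exact tendsto_finsetSum _ fun j _ => Tendsto.mul_const _ (h i j)
    exact ge_of_tendsto' this fun k => (hF k).dotProduct_mulVec_nonneg v

theorem aux_mul {n : ℕ} {A B : Matrix (Fin n) (Fin n) ℝ} (hA : A.PosSemidef)
    (hB : B.PosSemidef) : (Matrix.of fun i j => A i j * B i j).PosSemidef :=
  hA.hadamard hB

theorem aux_smul {n : ℕ} {A : Matrix (Fin n) (Fin n) ℝ} (hA : A.PosSemidef) {c : ℝ}
    (hc : 0 ≤ c) : (Matrix.of fun i j => c * A i j).PosSemidef :=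
  hA.smul hc

theorem aux_one_s16 {n : ℕ} : (Matrix.of fun (_ _ : Fin n) => (1 : ℝ)).PosSemidef := by
  convert Matrix.posSemidef_vecMulVec_self_star (fun _ : Fin n => (1 : ℝ)) using 1
  ext i j
  simp [Matrix.vecMulVec]

/-- iteration for `1 - √(1-u)` -/
noncomputable def auxG (u : ℝ) : ℕ → ℝ
  | 0 => 0
  | k + 1 => (u + auxG u k ^ 2) / 2

open Filter Topology in
theorem auxG_lim (φ : ℝ) (h : 0 ≤ Real.cos φ) :
    Tendsto (auxG (Real.sin φ ^ 2)) atTop (𝓝 (1 - Real.cos φ)) := by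
  set u := Real.sin φ ^ 2 with hu
  have hc : u = 1 - Real.cos φ ^ 2 := by rw [hu, Real.sin_sq]
  have h1 := Real.cos_le_one φ
  have hb : ∀ k, 0 ≤ auxG u k ∧ auxG u k ≤ 1 - Real.cos φ := by
    intro k
    induction k with
    | zero => simp [auxG, h1]
    | succ k ih =>
      simp only [auxG]
      refine ⟨by positivity, ?_⟩
      nlinarith [ih.1, ih.2]
  have hm : Monotone (auxG u) := by
    refine monotone_nat_of_le_succ fun k => ?_
    induction k with
    | zero => simp only [auxG]; positivity
    | succ k ih =>
      have := (hb k).1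
      simp only [auxG] at ih ⊢
      gcongr
  have hbd : BddAbove (Set.range (auxG u)) := ⟨1 - Real.cos φ, by rintro _ ⟨k, rfl⟩; exact (hb k).2⟩
  have hL := tendsto_atTop_ciSup hm hbd
  set L := ⨆ k, auxG u k
  have hL1 : L ≤ 1 - Real.cos φ := le_of_tendsto' hL fun k => (hb k).2
  have h2 : Tendsto (fun k => auxG u (k + 1)) atTop (𝓝 ((u + L ^ 2) / 2)) := by
    simp only [auxG]
    exact ((hL.pow 2).const_add u).div_const 2
  have h3 := tendsto_nhds_unique (hL.comp (tendsto_add_atTop_nat 1)) h2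
  have h4 : (1 - L) ^ 2 = Real.cos φ ^ 2 := by nlinarith
  have h5 : 1 - L = Real.cos φ := by
    rwa [sq_eq_sq₀ (by linarith) h] at h4
  rw [← h5]
  simpa using hL

theorem aux_cos {n : ℕ} (φ : Fin n → Fin n → ℝ) (h : ∀ i j, 0 ≤ Real.cos (φ i j))
    (hA : (Matrix.of fun i j => Real.sin (φ i j) ^ 2).PosSemidef) :
    (Matrix.of fun i j => 1 - Real.cos (φ i j)).PosSemidef := by
  refine aux_limit (fun k => Matrix.of fun i j => auxG (Real.sin (φ i j) ^ 2) k) _ ?_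
    fun i j => auxG_lim _ (h i j)
  intro k
  induction k with
  | zero => exact Matrix.PosSemidef.zero
  | succ k ih =>
    convert aux_smul (hA.add (aux_mul ih ih)) (c := 1 / 2) (by norm_num) using 1
    ext i j
    simp [auxG]
    ring

theorem aux_inv {n : ℕ} (A : Matrix (Fin n) (Fin n) ℝ) (h0 : ∀ i j, 0 ≤ A i j)
    (h1 : ∀ i j, A i j < 1) (hA : A.PosSemidef) :
    (Matrix.of fun i j => (1 - A i j)⁻¹).PosSemidef := by
  have hp : ∀ k : ℕ, (Matrix.of fun i j => A i j ^ k).PosSemidef := by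
    intro k
    induction k with
    | zero => simpa using aux_one_s16
    | succ k ih =>
      convert aux_mul ih hA using 1
      ext i j
      simp [pow_succ]
  refine aux_limit (fun k => Matrix.of fun i j => ∑ l ∈ Finset.range k, A i j ^ l) _ ?_
    fun i j => (hasSum_geometric_of_lt_one (h0 i j) (h1 i j)).tendsto_sum_nat
  intro k
  induction k with
  | zero => exact Matrix.PosSemidef.zero
  | succ k ih =>
    convert ih.add (hp k) using 1
    ext i j
    simp [Finset.sum_range_succ]

theorem aux_half {n : ℕ} (θ : Fin n → Fin n → ℝ) (h : ∀ i j, |θ i j| ≤ Real.pi / 2)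
    (hA : (Matrix.of fun i j => Real.sin (θ i j)).PosSemidef) :
    (Matrix.of fun i j => Real.sin (θ i j / 2)).PosSemidef := by
  have hpi := Real.pi_pos
  have hc : ∀ i j, 0 ≤ Real.cos (θ i j) := fun i j =>
    Real.cos_nonneg_of_mem_Icc ⟨(abs_le.1 (h i j)).1.trans' (by linarith), (abs_le.1 (h i j)).2⟩
  have hc2 : ∀ i j, 0 < Real.cos (θ i j / 2) := fun i j =>
    Real.cos_pos_of_mem_Ioo ⟨by linarith [(abs_le.1 (h i j)).1], by linarith [(abs_le.1 (h i j)).2]⟩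
  have s1 : (Matrix.of fun i j => 1 - Real.cos (θ i j)).PosSemidef := by
    refine aux_cos θ hc ?_
    convert aux_mul hA hA using 1
    ext i j
    simp [sq]
  have s2 : (Matrix.of fun i j => 1 - Real.cos (θ i j / 2)).PosSemidef := by
    refine aux_cos (fun i j => θ i j / 2) (fun i j => (hc2 i j).le) ?_
    convert aux_smul s1 (c := 1 / 2) (by norm_num) using 1
    ext i j
    simp only [Matrix.of_apply]
    rw [Real.sin_sq, Real.cos_sq, mul_div_cancel₀ _ (two_ne_zero)]
    ring
  have s3 := aux_inv _ (fun i j => by simp [Real.cos_le_one]) (fun i j => by simp [hc2]) s2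
  convert aux_smul (aux_mul hA s3) (c := 1 / 2) (by norm_num) using 1
  ext i j
  have e : Real.sin (θ i j) = 2 * Real.sin (θ i j / 2) * Real.cos (θ i j / 2) := by
    rw [← Real.sin_two_mul]; congr 1; ring
  have := (hc2 i j).ne'
  simp only [Matrix.of_apply, sub_sub_cancel]
  rw [e]
  field_simp

open Filter Topology in
theorem aux_angle {n : ℕ} (θ : Fin n → Fin n → ℝ) (h : ∀ i j, |θ i j| ≤ Real.pi / 2)
    (hA : (Matrix.of fun i j => Real.sin (θ i j)).PosSemidef) :
    (Matrix.of θ).PosSemidef := by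
  have hk : ∀ k : ℕ, (Matrix.of fun i j => Real.sin (θ i j / 2 ^ k)).PosSemidef := by
    intro k
    induction k with
    | zero => simpa using hA
    | succ k ih =>
      have := aux_half (fun i j => θ i j / 2 ^ k) (fun i j => ?_) ih
      · convert this using 5
        rw [pow_succ, div_div]
      · rw [abs_div, abs_of_pos (by positivity : (0:ℝ) < 2 ^ k)]
        exact (div_le_self (abs_nonneg _) (one_le_pow₀ (by norm_num))).trans (h i j)
  refine aux_limit (fun k => Matrix.of fun i j => 2 ^ k * Real.sin (θ i j / 2 ^ k)) _
    (fun k => aux_smul (hk k) (by positivity)) fun i j => ?_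
  simp only [Matrix.of_apply]
  have h0 : Tendsto (fun k : ℕ => θ i j / 2 ^ k) atTop (𝓝 0) :=
    (tendsto_pow_atTop_atTop_of_one_lt (by norm_num : (1:ℝ) < 2)).const_div_atTop _
  have h1 := ((Real.continuous_sinc.tendsto 0).comp h0).const_mul (θ i j)
  rw [Real.sinc_zero, mul_one] at h1
  refine h1.congr fun k => ?_
  simp only [Function.comp]
  by_cases hz : θ i j = 0
  · simp [hz]
  · rw [Real.sinc_of_ne_zero (by positivity)]
    field_simp

open Finset in
/-- The geodesic distance `d(x,y) = arccos⟪x,y⟫` on the unit sphere `S³` of Euclidean `ℝ⁴`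
is a restricted negative definite kernel. -/
theorem sphere_geodesic_dist_restricted_negdef
    (n : ℕ) (x : Fin n → Metric.sphere (0 : EuclideanSpace ℝ (Fin 4)) 1) (ξ : Fin n → ℂ)
    (hξ : (∑ i, ξ i) = 0) :
    (∑ i, ∑ j,
      ((Real.arccos (inner (𝕜 := ℝ) (x i : EuclideanSpace ℝ (Fin 4))
        (x j : EuclideanSpace ℝ (Fin 4))) : ℝ) : ℂ)
        * ξ i * (starRingEnd ℂ) (ξ j)).re ≤ 0 := by
  set t : Fin n → Fin n → ℝ := fun i j => inner (𝕜 := ℝ) (x i : EuclideanSpace ℝ (Fin 4))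
        (x j : EuclideanSpace ℝ (Fin 4)) with ht
  have hb : ∀ i j, |t i j| ≤ 1 := by
    intro i j
    have := abs_real_inner_le_norm (x i : EuclideanSpace ℝ (Fin 4)) (x j)
    simpa using this
  have hP : (Matrix.of fun i j => Real.arcsin (t i j)).PosSemidef := by
    refine aux_angle _ (fun i j => abs_le.2 ⟨Real.neg_pi_div_two_le_arcsin _,
      Real.arcsin_le_pi_div_two _⟩) ?_
    have e : (Matrix.of fun i j => Real.sin (Real.arcsin (t i j))) =
        Matrix.gram ℝ (fun i => (x i : EuclideanSpace ℝ (Fin 4))) := by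
      ext i j
      exact Real.sin_arcsin (abs_le.1 (hb i j)).1 (abs_le.1 (hb i j)).2
    rw [e]
    exact Matrix.posSemidef_gram ℝ _
  have key : ∀ v : Fin n → ℝ, ∑ i, v i = 0 →
      ∑ i, ∑ j, Real.arccos (t i j) * (v i * v j) ≤ 0 := by
    intro v hv
    have h1 := hP.dotProduct_mulVec_nonneg v
    have h2 : ∑ i, ∑ j, Real.arccos (t i j) * (v i * v j) =
        Real.pi / 2 * ((∑ i, v i) * ∑ j, v j) - ∑ i, v i * ∑ j, Real.arcsin (t i j) * v j := by
      rw [sum_mul_sum]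
      simp only [mul_sum, ← sum_sub_distrib, Real.arccos]
      refine sum_congr rfl fun i _ => sum_congr rfl fun j _ => by ring
    simp only [dotProduct, Matrix.mulVec, Matrix.of_apply, star_trivial] at h1
    rw [h2, hv]
    linarith
  have hr := key (fun i => (ξ i).re) (by simpa using congrArg Complex.re hξ)
  have hi := key (fun i => (ξ i).im) (by simpa using congrArg Complex.im hξ)
  have := add_nonpos hr hi
  rw [← sum_add_distrib] at this
  simp only [← sum_add_distrib] at this
  refine le_of_eq_of_le ?_ this
  simp only [Complex.re_sum]
  refine sum_congr rfl fun i _ => sum_congr rfl fun j _ => ?_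
  simp
  ring
end
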